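/- Let a > 0 and 0 < α < 1. The second mixed problem ∂²ₜu − a²∂²ₓu = u^α on the closed quadrant [0,∞)×[0,∞) with zero initial conditions u(0,x) = 0, ∂ₜu(0,x) = 0 for x ≥ 0 and zero Neumann boundary condition ∂ₓu(t,0) = 0 for t ≥ 0 has infinitely many classical solutions. More precisely, the set of classical solutions contains the pairwise distinct family consisting of the trivial solution u ≡ 0 together with the functions u_{p;s}, s ≥ 0, where u_{p;s}(t,x) = 0 for 0 ≤ t < s and u_{p;s}(t,x) = ((1−α)²/(2(1+α)))^{1/(1−α)}·(t−s)^{2/(1−α)} for t ≥ s; in particular the map s ↦ u_{p;s} is injective on [0,∞), none of the u_{p;s} equals the zero function, and hence the classical solution of this problem is not unique. -/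

import Mathlib

/-!
A function `f(t)` of time alone solves the problem as soon as `f'' = fᵅ` and `f(0) = f'(0) = 0`.
Since `α < 1`, this equation does not determine `f`: besides `f = 0` it has the solution
`c tᵇ`, where comparing exponents and coefficients forces `b = 2 / (1 - α)` and
`c ^ (1 - α) = 1 / (b (b - 1))`. As `0 < α` gives `2 < b`, extending `c tᵇ` by zero to negative
times keeps it `C²`, so it can be delayed by any `s ≥ 0`, and the delay is recovered as the time
at which the solution leaves zero.
-/

open Set

/-- A classical solution of the second mixed problem
`∂ₜ²u − a²∂ₓ²u = uᵅ` on the closed quadrant `[0,∞) × [0,∞)` with zero initial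
conditions `u(0,x) = 0`, `∂ₜu(0,x) = 0` and zero Neumann boundary condition
`∂ₓu(t,0) = 0`: a `C²` function on the quadrant (one-sided derivatives at the
boundary, i.e. derivatives within the quadrant) satisfying the equation and all
initial and boundary conditions pointwise.  Here `z ^ α` is the real power (rpow). -/
def IsClassicalSolution (a α : ℝ) (u : ℝ → ℝ → ℝ) : Prop :=
  ContDiffOn ℝ 2 (fun p : ℝ × ℝ => u p.1 p.2) (Ici 0 ×ˢ Ici 0) ∧
  (∀ t ∈ Ici (0:ℝ), ∀ x ∈ Ici (0:ℝ),
    derivWithin (fun τ => derivWithin (fun σ => u σ x) (Ici 0) τ) (Ici 0) t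
      - a ^ 2 * derivWithin (fun ξ => derivWithin (fun η => u t η) (Ici 0) ξ) (Ici 0) x
      = (u t x) ^ α) ∧
  (∀ x ∈ Ici (0:ℝ), u 0 x = 0) ∧
  (∀ x ∈ Ici (0:ℝ), derivWithin (fun τ => u τ x) (Ici 0) 0 = 0) ∧
  (∀ t ∈ Ici (0:ℝ), derivWithin (fun ξ => u t ξ) (Ici 0) 0 = 0)

/-- The glued self-similar solution with delay parameter `s`: zero for `t < s` and
`((1−α)²/(2(1+α)))^{1/(1−α)}·(t−s)^{2/(1−α)}` for `t ≥ s`. -/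
noncomputable def uPGlued (α s : ℝ) : ℝ → ℝ → ℝ :=
  fun t _x =>
    if t < s then 0
    else ((1 - α) ^ 2 / (2 * (1 + α))) ^ (1 / (1 - α)) * (t - s) ^ (2 / (1 - α))

theorem contDiffOn_succ_of_hasDerivWithinAt {𝕜 F : Type*} [NontriviallyNormedField 𝕜]
    [NormedAddCommGroup F] [NormedSpace 𝕜 F] {f f' : 𝕜 → F} {s : Set 𝕜} {n : ℕ}
    (hs : UniqueDiffOn 𝕜 s) (hf : ∀ x ∈ s, HasDerivWithinAt f (f' x) s x)
    (hf' : ContDiffOn 𝕜 n f' s) : ContDiffOn 𝕜 (n + 1) f s :=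
  (contDiffOn_succ_iff_derivWithin hs).2
    ⟨fun x hx ↦ (hf x hx).differentiableWithinAt, by simp,
      hf'.congr fun x hx ↦ (hf x hx).derivWithin (hs x hx)⟩

theorem hasDerivAt_posPart_rpow {b : ℝ} (hb : 1 < b) (t : ℝ) :
    HasDerivAt (fun τ : ℝ ↦ τ⁺ ^ b) (b * t⁺ ^ (b - 1)) t := by
  have continuous_posPart_rpow {r : ℝ} (hr : 0 < r) : Continuous fun τ : ℝ ↦ τ⁺ ^ r :=
    continuous_posPart.rpow_const fun _ ↦ .inr hr.le
  refine hasDerivAt_of_hasDerivAt_of_ne' (x := 0) (g := fun τ ↦ b * τ⁺ ^ (b - 1)) ?_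
    (continuous_posPart_rpow (by linarith)).continuousAt
    ((continuous_posPart_rpow (by linarith)).const_mul b).continuousAt t
  intro y hy
  rcases hy.lt_or_gt with hneg | hpos
  · have hconst : (fun τ : ℝ ↦ τ⁺ ^ b) =ᶠ[nhds y] fun _ ↦ 0 := by
      filter_upwards [Iio_mem_nhds hneg] with z hz
      rw [posPart_of_nonpos (le_of_lt hz), Real.zero_rpow (by linarith)]
    rw [posPart_of_nonpos hneg.le, Real.zero_rpow (by linarith), mul_zero]
    exact (hasDerivAt_const y 0).congr_of_eventuallyEq hconst
  · have hpow : (fun τ : ℝ ↦ τ⁺ ^ b) =ᶠ[nhds y] fun τ ↦ τ ^ b := by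
      filter_upwards [Ioi_mem_nhds hpos] with z hz
      rw [posPart_of_nonneg (le_of_lt hz)]
    rw [posPart_of_nonneg hpos.le]
    exact (Real.hasDerivAt_rpow_const (.inr hb.le)).congr_of_eventuallyEq hpow

theorem isClassicalSolution_of_hasDerivWithinAt (a : ℝ) {α : ℝ} {f f' : ℝ → ℝ} (hα : 0 ≤ α)
    (hf : ∀ t ∈ Ici 0, HasDerivWithinAt f (f' t) (Ici 0) t)
    (hf' : ∀ t ∈ Ici 0, HasDerivWithinAt f' (f t ^ α) (Ici 0) t)
    (hf₀ : f 0 = 0) (hf'₀ : f' 0 = 0) : IsClassicalSolution a α fun t _ ↦ f t := by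
  have hunique : UniqueDiffOn ℝ (Ici (0 : ℝ)) := uniqueDiffOn_Ici 0
  have hderiv : EqOn (derivWithin f (Ici 0)) f' (Ici 0) := fun t ht ↦
    (hf t ht).derivWithin (hunique t ht)
  have hderiv₂ : EqOn (derivWithin (derivWithin f (Ici 0)) (Ici 0)) (fun t ↦ f t ^ α) (Ici 0) :=
    fun t ht ↦ (derivWithin_congr hderiv (hderiv ht)).trans <|
      (hf' t ht).derivWithin (hunique t ht)
  have hcont : ContinuousOn (fun t ↦ f t ^ α) (Ici 0) :=
    ContinuousOn.rpow_const (fun t ht ↦ (hf t ht).continuousWithinAt) fun _ _ ↦ .inr hα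
  have hf'_contDiff : ContDiffOn ℝ (0 + 1 : ℕ) f' (Ici 0) :=
    contDiffOn_succ_of_hasDerivWithinAt hunique hf' (contDiffOn_zero.2 hcont)
  have hf_contDiff : ContDiffOn ℝ 2 f (Ici 0) := by
    simpa [one_add_one_eq_two] using contDiffOn_succ_of_hasDerivWithinAt hunique hf hf'_contDiff
  refine ⟨hf_contDiff.comp contDiff_fst.contDiffOn fun p hp ↦ hp.1, fun t ht x _ ↦ ?_,
    fun _ _ ↦ hf₀, fun _ _ ↦ (hderiv self_mem_Ici).trans hf'₀, fun t _ ↦ ?_⟩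
  · simpa using hderiv₂ ht
  · simp

theorem isClassicalSolution_zero (a : ℝ) {α : ℝ} (hα : 0 < α) :
    IsClassicalSolution a α fun _ _ ↦ 0 :=
  isClassicalSolution_of_hasDerivWithinAt a (f' := fun _ ↦ 0) hα.le
    (fun t _ ↦ hasDerivWithinAt_const t _ 0)
    (fun t _ ↦ by simpa [Real.zero_rpow hα.ne'] using hasDerivWithinAt_const t (Ici 0) (0 : ℝ))
    rfl rfl

/-- The exponent `b` of the power solution `c tᵇ` of `f'' = fᵅ`. -/
noncomputable def profileExponent (α : ℝ) : ℝ :=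
  2 / (1 - α)

/-- The coefficient `c` of the power solution `c tᵇ` of `f'' = fᵅ`. -/
noncomputable def profileCoeff (α : ℝ) : ℝ :=
  ((1 - α) ^ 2 / (2 * (1 + α))) ^ (1 / (1 - α))

/-- The power solution `c tᵇ` of `f'' = fᵅ` on `[0, ∞)`, extended by zero to negative times;
the solution `uPGlued α s` is its translate by `s`. -/
noncomputable def profile (α t : ℝ) : ℝ :=
  profileCoeff α * t⁺ ^ profileExponent α

theorem two_lt_profileExponent {α : ℝ} (hα₀ : 0 < α) (hα₁ : α < 1) : 2 < profileExponent α := by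
  rw [profileExponent, lt_div_iff₀ (sub_pos.2 hα₁)]
  linarith

section Profile

variable {α : ℝ} (hα : -1 < α) (hα₁ : α ≠ 1)
include hα hα₁

theorem profileCoeff_base_pos : 0 < (1 - α) ^ 2 / (2 * (1 + α)) :=
  div_pos (sq_pos_of_ne_zero (sub_ne_zero.2 hα₁.symm)) (by linarith)

theorem profileCoeff_pos : 0 < profileCoeff α :=
  Real.rpow_pos_of_pos (profileCoeff_base_pos hα hα₁) _

theorem profileCoeff_rpow :
    profileCoeff α ^ α = profileCoeff α * (profileExponent α * (profileExponent α - 1)) := by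
  have hne : 1 - α ≠ 0 := sub_ne_zero.2 hα₁.symm
  calc profileCoeff α ^ α = profileCoeff α ^ (1 - (1 - α)) := by rw [sub_sub_cancel]
    _ = profileCoeff α / profileCoeff α ^ (1 - α) := by
      rw [Real.rpow_sub (profileCoeff_pos hα hα₁), Real.rpow_one]
    _ = profileCoeff α / ((1 - α) ^ 2 / (2 * (1 + α))) := by
      congr 1
      rw [profileCoeff, one_div, Real.rpow_inv_rpow (profileCoeff_base_pos hα hα₁).le hne]
    _ = profileCoeff α * (profileExponent α * (profileExponent α - 1)) := by
      rw [profileExponent]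
      field_simp
      ring

theorem profile_rpow (t : ℝ) :
    profile α t ^ α = profileCoeff α *
      (profileExponent α * ((profileExponent α - 1) * t⁺ ^ (profileExponent α - 1 - 1))) := by
  have hexponent : profileExponent α * α = profileExponent α - 1 - 1 := by
    have hne : 1 - α ≠ 0 := sub_ne_zero.2 hα₁.symm
    rw [profileExponent]
    field_simp
    ring
  rw [profile, Real.mul_rpow (profileCoeff_pos hα hα₁).le (by positivity),
    ← Real.rpow_mul (posPart_nonneg t), profileCoeff_rpow hα hα₁, hexponent]
  ring

theorem profile_eq_zero_iff {t : ℝ} : profile α t = 0 ↔ t ≤ 0 := by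
  have hexponent : profileExponent α ≠ 0 := div_ne_zero two_ne_zero (sub_ne_zero.2 hα₁.symm)
  rw [profile, mul_eq_zero_iff_left (profileCoeff_pos hα hα₁).ne',
    Real.rpow_eq_zero (posPart_nonneg t) hexponent, posPart_eq_zero]

theorem uPGlued_eq_profile (s t x : ℝ) : uPGlued α s t x = profile α (t - s) := by
  rw [uPGlued]
  split_ifs with hts
  · exact ((profile_eq_zero_iff hα hα₁).2 (by linarith)).symm
  · rw [profile, posPart_of_nonneg (by linarith), profileCoeff, profileExponent]

theorem uPGlued_eq_zero_iff {s t x : ℝ} : uPGlued α s t x = 0 ↔ t ≤ s := by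
  rw [uPGlued_eq_profile hα hα₁, profile_eq_zero_iff hα hα₁, sub_nonpos]

end Profile

theorem isClassicalSolution_uPGlued (a : ℝ) {α s : ℝ} (hα₀ : 0 < α) (hα₁ : α < 1) (hs : 0 ≤ s) :
    IsClassicalSolution a α (uPGlued α s) := by
  have hα : -1 < α := by linarith
  have hexponent : 2 < profileExponent α := two_lt_profileExponent hα₀ hα₁
  rw [show uPGlued α s = fun t _ ↦ profile α (t - s) from
    funext₂ (uPGlued_eq_profile hα hα₁.ne s)]
  refine isClassicalSolution_of_hasDerivWithinAt a
    (f' := fun t ↦ profileCoeff α * (profileExponent α * (t - s)⁺ ^ (profileExponent α - 1)))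
    hα₀.le (fun t _ ↦ ?_) (fun t _ ↦ ?_) ?_ ?_
  · exact (((hasDerivAt_posPart_rpow (by linarith) _).comp_sub_const t s).const_mul
      _).hasDerivWithinAt
  · rw [profile_rpow hα hα₁.ne]
    exact ((((hasDerivAt_posPart_rpow (by linarith) _).comp_sub_const t s).const_mul
      _).const_mul _).hasDerivWithinAt
  · exact (profile_eq_zero_iff hα hα₁.ne).2 (by linarith)
  · rw [posPart_of_nonpos (by linarith), Real.zero_rpow (by linarith), mul_zero, mul_zero]

theorem delay_le_of_uPGlued_eq {α s₁ s₂ : ℝ} (hα : -1 < α) (hα₁ : α ≠ 1) (hs₁ : 0 ≤ s₁)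
    (h : ∀ t ∈ Ici (0 : ℝ), ∀ x ∈ Ici (0 : ℝ), uPGlued α s₁ t x = uPGlued α s₂ t x) :
    s₁ ≤ s₂ :=
  (uPGlued_eq_zero_iff hα hα₁).1 <|
    (h s₁ hs₁ 0 self_mem_Ici).symm.trans ((uPGlued_eq_zero_iff hα hα₁).2 le_rfl)

/-- **Non-uniqueness of the classical solution.** For `a > 0` and `0 < α < 1`, the
second mixed problem `∂ₜ²u − a²∂ₓ²u = uᵅ` on `[0,∞) × [0,∞)` with zero initial data
and zero Neumann boundary condition has infinitely many classical solutions: the set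
of classical solutions is infinite; the trivial solution `u ≡ 0` is a classical
solution; every glued function `u_{p;s}`, `s ≥ 0`, is a classical solution; the map
`s ↦ u_{p;s}` is injective on `[0,∞)` (even as functions on the closed quadrant);
none of the `u_{p;s}` vanishes identically on the quadrant; and hence the classical
solution of the problem is not unique. -/
theorem classical_solution_not_unique
    (a α : ℝ) (ha : 0 < a) (hα1 : 0 < α) (hα2 : α < 1) :
    {u : ℝ → ℝ → ℝ | IsClassicalSolution a α u}.Infinite ∧
    IsClassicalSolution a α (fun _ _ => 0) ∧
    (∀ s ∈ Ici (0:ℝ), IsClassicalSolution a α (uPGlued α s)) ∧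
    (∀ s₁ ∈ Ici (0:ℝ), ∀ s₂ ∈ Ici (0:ℝ),
      (∀ t ∈ Ici (0:ℝ), ∀ x ∈ Ici (0:ℝ), uPGlued α s₁ t x = uPGlued α s₂ t x) →
        s₁ = s₂) ∧
    (∀ s ∈ Ici (0:ℝ), ¬ ∀ t ∈ Ici (0:ℝ), ∀ x ∈ Ici (0:ℝ), uPGlued α s t x = 0) ∧
    ∃ u v : ℝ → ℝ → ℝ, IsClassicalSolution a α u ∧ IsClassicalSolution a α v ∧
      ∃ t ∈ Ici (0:ℝ), ∃ x ∈ Ici (0:ℝ), u t x ≠ v t x := by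
  have hα : -1 < α := by linarith
  have hzero := isClassicalSolution_zero a hα1
  have hsol (s : ℝ) (hs : s ∈ Ici 0) : IsClassicalSolution a α (uPGlued α s) :=
    isClassicalSolution_uPGlued a hα1 hα2 hs
  have hinj : ∀ s₁ ∈ Ici (0 : ℝ), ∀ s₂ ∈ Ici (0 : ℝ),
      (∀ t ∈ Ici (0 : ℝ), ∀ x ∈ Ici (0 : ℝ), uPGlued α s₁ t x = uPGlued α s₂ t x) → s₁ = s₂ :=
    fun _ hs₁ _ hs₂ h ↦ le_antisymm (delay_le_of_uPGlued_eq hα hα2.ne hs₁ h)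
      (delay_le_of_uPGlued_eq hα hα2.ne hs₂ fun t ht x hx ↦ (h t ht x hx).symm)
  have hne (s : ℝ) (hs : s ∈ Ici 0) :
      ¬ ∀ t ∈ Ici (0 : ℝ), ∀ x ∈ Ici (0 : ℝ), uPGlued α s t x = 0 := fun h ↦
    (lt_add_one s).not_ge <| (uPGlued_eq_zero_iff hα hα2.ne).1 <|
      h (s + 1) (mem_Ici.2 (add_nonneg hs zero_le_one)) 0 self_mem_Ici
  refine ⟨?_, hzero, hsol, hinj, hne, uPGlued α 0, _, hsol 0 self_mem_Ici, hzero, ?_⟩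
  · exact infinite_of_injOn_mapsTo
      (fun s₁ hs₁ s₂ hs₂ h ↦ hinj s₁ hs₁ s₂ hs₂ fun t _ x _ ↦ congrFun₂ h t x) hsol (Ici_infinite 0)
  · simpa only [not_forall, exists_prop] using hne 0 self_mem_Ici
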